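/- Chain of inclusions of feasible sets (Proposition 2): for every performance level γ ≥ γ_f, one has 𝒵_f ⊆ X_1^γ, and X_T^γ ⊆ X_{T+1}^γ for every horizon length T ≥ 1. -/

import Mathlib

open Matrix

noncomputable section

/-- Index type for stacked state / disturbance trajectories over horizon `T`:
block index in `Fin (T+1)`, coordinate in `Fin n`. -/
abbrev SIdx (n T : ℕ) := Fin (T + 1) × Fin n

/-- Index type for stacked input trajectories over horizon `T`. -/
abbrev UIdx (m T : ℕ) := Fin T × Fin m

/-- The block-downshift operator `𝐙`. -/
def Zshift (n T : ℕ) : Matrix (SIdx n T) (SIdx n T) ℝ :=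
  Matrix.of fun p q => if (p.1 : ℕ) = (q.1 : ℕ) + 1 ∧ p.2 = q.2 then (1 : ℝ) else 0

/-- `𝐀 = I_{T+1} ⊗ A`. -/
def bigA (n T : ℕ) (A : Matrix (Fin n) (Fin n) ℝ) : Matrix (SIdx n T) (SIdx n T) ℝ :=
  Matrix.of fun p q => if p.1 = q.1 then A p.2 q.2 else 0

/-- `𝐁 = col(I_T ⊗ B, 0)`. -/
def bigB (n m T : ℕ) (B : Matrix (Fin n) (Fin m) ℝ) : Matrix (SIdx n T) (UIdx m T) ℝ :=
  Matrix.of fun p q => if (p.1 : ℕ) = (q.1 : ℕ) then B p.2 q.2 else 0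

/-- `𝐐 = blkdiag(I_T ⊗ Q, 0)`. -/
def bigQ (n T : ℕ) (Q : Matrix (Fin n) (Fin n) ℝ) : Matrix (SIdx n T) (SIdx n T) ℝ :=
  Matrix.of fun p q => if p.1 = q.1 ∧ (p.1 : ℕ) < T then Q p.2 q.2 else 0

/-- `𝐑 = I_T ⊗ R`. -/
def bigR (m T : ℕ) (R : Matrix (Fin m) (Fin m) ℝ) : Matrix (UIdx m T) (UIdx m T) ℝ :=
  Matrix.of fun p q => if p.1 = q.1 then R p.2 q.2 else 0

/-- `𝐅 = (I − 𝐙𝐀)⁻¹𝐙𝐁`. -/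
def bigF (n m T : ℕ) (A : Matrix (Fin n) (Fin n) ℝ) (B : Matrix (Fin n) (Fin m) ℝ) :
    Matrix (SIdx n T) (UIdx m T) ℝ :=
  (1 - Zshift n T * bigA n T A)⁻¹ * (Zshift n T * bigB n m T B)

/-- `𝐆 = (I − 𝐙𝐀)⁻¹`. -/
def bigG (n T : ℕ) (A : Matrix (Fin n) (Fin n) ℝ) : Matrix (SIdx n T) (SIdx n T) ℝ :=
  (1 - Zshift n T * bigA n T A)⁻¹

/-- The control cost `J_T(u, δ) = xᵀ𝐐x + uᵀ𝐑u` with `x = 𝐅u + 𝐆δ`. -/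
def costJ (n m T : ℕ) (A : Matrix (Fin n) (Fin n) ℝ) (B : Matrix (Fin n) (Fin m) ℝ)
    (Q : Matrix (Fin n) (Fin n) ℝ) (R : Matrix (Fin m) (Fin m) ℝ)
    (u : UIdx m T → ℝ) (δ : SIdx n T → ℝ) : ℝ :=
  let x := bigF n m T A B *ᵥ u + bigG n T A *ᵥ δ
  x ⬝ᵥ (bigQ n T Q *ᵥ x) + u ⬝ᵥ (bigR m T R *ᵥ u)

/-- `𝐏 = 𝐑 + 𝐅ᵀ𝐐𝐅`. -/
def bigP (n m T : ℕ) (A : Matrix (Fin n) (Fin n) ℝ) (B : Matrix (Fin n) (Fin m) ℝ)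
    (Q : Matrix (Fin n) (Fin n) ℝ) (R : Matrix (Fin m) (Fin m) ℝ) :
    Matrix (UIdx m T) (UIdx m T) ℝ :=
  bigR m T R + (bigF n m T A B)ᵀ * bigQ n T Q * bigF n m T A B

/-- The clairvoyant cost matrix `𝐂_T = 𝐆ᵀ𝐐(I + 𝐅𝐑⁻¹𝐅ᵀ𝐐)⁻¹𝐆`. -/
def Cmat (n m T : ℕ) (A : Matrix (Fin n) (Fin n) ℝ) (B : Matrix (Fin n) (Fin m) ℝ)
    (Q : Matrix (Fin n) (Fin n) ℝ) (R : Matrix (Fin m) (Fin m) ℝ) :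
    Matrix (SIdx n T) (SIdx n T) ℝ :=
  (bigG n T A)ᵀ * bigQ n T Q *
    (1 + bigF n m T A B * (bigR m T R)⁻¹ * (bigF n m T A B)ᵀ * bigQ n T Q)⁻¹ * bigG n T A

/-- Assemble `δ = col(x₀, w₀, …, w_{T−1})`. -/
def assemble (n T : ℕ) (x0 : Fin n → ℝ) (w : Fin T × Fin n → ℝ) : SIdx n T → ℝ :=
  fun p => if h : (p.1 : ℕ) = 0 then x0 p.2
    else w (⟨(p.1 : ℕ) - 1, by have := p.1.isLt; omega⟩, p.2)

/-- `𝐐̄ = blkdiag(I_T ⊗ Q, P)`. -/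
def bigQbar (n T : ℕ) (Q P : Matrix (Fin n) (Fin n) ℝ) : Matrix (SIdx n T) (SIdx n T) ℝ :=
  Matrix.of fun p q =>
    if p.1 = q.1 then (if (p.1 : ℕ) < T then Q p.2 q.2 else P p.2 q.2) else 0

/-- `𝐒̄ = blkdiag(𝐐̄, 𝐑)`. -/
def bigS (n m T : ℕ) (Q P : Matrix (Fin n) (Fin n) ℝ) (R : Matrix (Fin m) (Fin m) ℝ) :
    Matrix (SIdx n T ⊕ UIdx m T) (SIdx n T ⊕ UIdx m T) ℝ :=
  Matrix.fromBlocks (bigQbar n T Q P) 0 0 (bigR m T R)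

/-- The regret `Reg_T(Φx, Φu, γ, δ)` for `δ = col(x₀, w)`:
`col(Φxδ, Φuδ)ᵀ𝐒̄ col(Φxδ, Φuδ) − δᵀ𝐂_Tδ − γ²wᵀw`. -/
def RegT (n m T : ℕ) (A : Matrix (Fin n) (Fin n) ℝ) (B : Matrix (Fin n) (Fin m) ℝ)
    (Q : Matrix (Fin n) (Fin n) ℝ) (R : Matrix (Fin m) (Fin m) ℝ)
    (P : Matrix (Fin n) (Fin n) ℝ) (γ : ℝ)
    (Φx : Matrix (SIdx n T) (SIdx n T) ℝ) (Φu : Matrix (UIdx m T) (SIdx n T) ℝ)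
    (x0 : Fin n → ℝ) (w : Fin T × Fin n → ℝ) : ℝ :=
  let δ := assemble n T x0 w
  let z : SIdx n T ⊕ UIdx m T → ℝ := Sum.elim (Φx *ᵥ δ) (Φu *ᵥ δ)
  z ⬝ᵥ (bigS n m T Q P R *ᵥ z) - δ ⬝ᵥ (Cmat n m T A B Q R *ᵥ δ) - γ ^ 2 * (w ⬝ᵥ w)
/-- A pair of closed-loop responses is causal if both matrices are block lower
triangular (all blocks strictly above the block diagonal vanish). -/
def causalPair (n m T : ℕ) (Φx : Matrix (SIdx n T) (SIdx n T) ℝ)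
    (Φu : Matrix (UIdx m T) (SIdx n T) ℝ) : Prop :=
  (∀ p q : SIdx n T, (p.1 : ℕ) < (q.1 : ℕ) → Φx p q = 0) ∧
  (∀ (p : UIdx m T) (q : SIdx n T), (p.1 : ℕ) < (q.1 : ℕ) → Φu p q = 0)

/-- Achievability: `(I − 𝐙𝐀)Φx − 𝐙𝐁Φu = I`. -/
def achievablePair (n m T : ℕ) (A : Matrix (Fin n) (Fin n) ℝ) (B : Matrix (Fin n) (Fin m) ℝ)
    (Φx : Matrix (SIdx n T) (SIdx n T) ℝ) (Φu : Matrix (UIdx m T) (SIdx n T) ℝ) : Prop :=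
  (1 - Zshift n T * bigA n T A) * Φx - Zshift n T * bigB n m T B * Φu = 1

/-- Safety: for every disturbance sequence with components in `𝒲`, the closed-loop state
and input trajectories satisfy `(x_t, u_t) ∈ 𝒵` for `t = 0, …, T−1` and `x_T ∈ 𝒵_f`. -/
def safePair (n m T : ℕ) (W : Set (Fin n → ℝ))
    (Zc : Set ((Fin n → ℝ) × (Fin m → ℝ))) (Zf : Set (Fin n → ℝ))
    (x0 : Fin n → ℝ) (Φx : Matrix (SIdx n T) (SIdx n T) ℝ)
    (Φu : Matrix (UIdx m T) (SIdx n T) ℝ) : Prop :=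
  ∀ w : Fin T × Fin n → ℝ, (∀ t : Fin T, (fun p => w (t, p)) ∈ W) →
    (∀ t : Fin T,
      ((fun p => (Φx *ᵥ assemble n T x0 w) (t.castSucc, p)),
        (fun q => (Φu *ᵥ assemble n T x0 w) (t, q))) ∈ Zc) ∧
    (fun p => (Φx *ᵥ assemble n T x0 w) (Fin.last T, p)) ∈ Zf

/-- `Φ_w`: the last `Tn` columns of `col(Φx, Φu)`. -/
def stackW (n m T : ℕ) (Φx : Matrix (SIdx n T) (SIdx n T) ℝ)
    (Φu : Matrix (UIdx m T) (SIdx n T) ℝ) :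
    Matrix (SIdx n T ⊕ UIdx m T) (Fin T × Fin n) ℝ :=
  Matrix.of fun r c =>
    Sum.elim (fun p => Φx p (c.1.succ, c.2)) (fun q => Φu q (c.1.succ, c.2)) r

/-- The linear matrix inequality `γ²I + 𝐂_T^{[1:T,1:T]} − Φ_wᵀ𝐒̄Φ_w ⪰ 0`. -/
def lmiOK (n m T : ℕ) (A : Matrix (Fin n) (Fin n) ℝ) (B : Matrix (Fin n) (Fin m) ℝ)
    (Q : Matrix (Fin n) (Fin n) ℝ) (R : Matrix (Fin m) (Fin m) ℝ)
    (P : Matrix (Fin n) (Fin n) ℝ) (γ : ℝ)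
    (Φx : Matrix (SIdx n T) (SIdx n T) ℝ) (Φu : Matrix (UIdx m T) (SIdx n T) ℝ) : Prop :=
  (γ ^ 2 • (1 : Matrix (Fin T × Fin n) (Fin T × Fin n) ℝ) +
    (Cmat n m T A B Q R).submatrix
      (fun c : Fin T × Fin n => ((c.1.succ : Fin (T + 1)), c.2))
      (fun c : Fin T × Fin n => ((c.1.succ : Fin (T + 1)), c.2)) -
    (stackW n m T Φx Φu)ᵀ * bigS n m T Q P R * stackW n m T Φx Φu).PosSemidef

/-- Membership in `Π_T^γ(x₀)`: causal, achievable, safe, and satisfying the LMI. -/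
def memPi (n m T : ℕ) (A : Matrix (Fin n) (Fin n) ℝ) (B : Matrix (Fin n) (Fin m) ℝ)
    (Q : Matrix (Fin n) (Fin n) ℝ) (R : Matrix (Fin m) (Fin m) ℝ)
    (P : Matrix (Fin n) (Fin n) ℝ) (W : Set (Fin n → ℝ))
    (Zc : Set ((Fin n → ℝ) × (Fin m → ℝ))) (Zf : Set (Fin n → ℝ))
    (γ : ℝ) (x0 : Fin n → ℝ)
    (Φx : Matrix (SIdx n T) (SIdx n T) ℝ) (Φu : Matrix (UIdx m T) (SIdx n T) ℝ) : Prop :=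
  causalPair n m T Φx Φu ∧ achievablePair n m T A B Φx Φu ∧
    safePair n m T W Zc Zf x0 Φx Φu ∧ lmiOK n m T A B Q R P γ Φx Φu

/-- The feasible set `X_T^γ = {x : Π_T^γ(x) ≠ ∅}`. -/
def Xset (n m T : ℕ) (A : Matrix (Fin n) (Fin n) ℝ) (B : Matrix (Fin n) (Fin m) ℝ)
    (Q : Matrix (Fin n) (Fin n) ℝ) (R : Matrix (Fin m) (Fin m) ℝ)
    (P : Matrix (Fin n) (Fin n) ℝ) (W : Set (Fin n → ℝ))
    (Zc : Set ((Fin n → ℝ) × (Fin m → ℝ))) (Zf : Set (Fin n → ℝ))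
    (γ : ℝ) : Set (Fin n → ℝ) :=
  {x | ∃ Φx Φu, memPi n m T A B Q R P W Zc Zf γ x Φx Φu}

/-!
Everything rests on one completion of squares, used for three players. For the controller who knows
all of `δ = (x₀, w)` in advance it shows, with Woodbury's identity, that `δᵀ𝐂_Tδ` is the least
running cost over all trajectories driven by `δ`; since stage costs are nonnegative, this can only
grow with the horizon. For the worst disturbance at price `γ_f²` it produces `P̄`, and for the best
input against `P̄` it produces the Riccati equation and the gain `K_f`. The last two give the
dissipation inequality for `u = K_f x` with storage function `xᵀPx`.

Tested on vectors, the LMI bounds `cost(0, w) + x_TᵀPx_T - δᵀ𝐂_Tδ` by `γ²wᵀw`. Prolonging a feasible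
closed loop by one step of `K_f` raises the left side by at most `γ²|w_T|²`, and the invariance of
`𝒵_f` keeps it safe. The chain starts at horizon zero, where the feasible set is `𝒵_f` itself.
-/

section Development

open Function (curry uncurry)

section CompletingTheSquare

variable {α β : Type*} [Fintype α]

theorem isSymm_transpose_mul_mul (F : Matrix α β ℝ) {Q : Matrix α α ℝ} (hQ : Q.IsSymm) :
    (Fᵀ * Q * F).IsSymm := by
  rw [IsSymm, transpose_mul, transpose_mul, transpose_transpose, hQ.eq, Matrix.mul_assoc]

theorem posDef_add_transpose_mul_mul [Finite β] {R : Matrix β β ℝ} {Q : Matrix α α ℝ}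
    (hR : R.PosDef) (hQ : Q.PosSemidef) (F : Matrix α β ℝ) : (R + Fᵀ * Q * F).PosDef :=
  have := Fintype.ofFinite β
  hR.add_posSemidef (by simpa using hQ.conjTranspose_mul_mul_same F)

variable [Fintype β]

theorem dotProduct_mulVec_nonneg_of_posSemidef {M : Matrix β β ℝ} (hM : M.PosSemidef)
    (x : β → ℝ) : 0 ≤ x ⬝ᵥ M *ᵥ x := by
  simpa only [star_trivial] using hM.dotProduct_mulVec_nonneg x

theorem dotProduct_mulVec_comm_of_isSymm {M : Matrix β β ℝ} (hM : M.IsSymm) (x y : β → ℝ) :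
    x ⬝ᵥ M *ᵥ y = y ⬝ᵥ M *ᵥ x := by
  rw [← dotProduct_transpose_mulVec, hM.eq]

theorem dotProduct_transpose_mul_mul_mulVec (F : Matrix α β ℝ) (Q : Matrix α α ℝ) (x : β → ℝ) :
    x ⬝ᵥ (Fᵀ * Q * F) *ᵥ x = (F *ᵥ x) ⬝ᵥ Q *ᵥ (F *ᵥ x) := by
  rw [Matrix.mul_assoc, ← mulVec_mulVec, ← mulVec_mulVec, dotProduct_transpose_mulVec,
    dotProduct_comm]

variable [DecidableEq β]

/-- The matrix of the quadratic form in `g` obtained from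
`(Fu + g)ᵀQ(Fu + g) + uᵀRu` by eliminating `u` at its stationary point. -/
def schurForm (F : Matrix α β ℝ) (Q : Matrix α α ℝ) (R : Matrix β β ℝ) : Matrix α α ℝ :=
  Q - Q * F * (R + Fᵀ * Q * F)⁻¹ * Fᵀ * Q

/-- The linear map sending `g` to the stationary point `u` of
`(Fu + g)ᵀQ(Fu + g) + uᵀRu`. -/
def stationaryGain (F : Matrix α β ℝ) (Q : Matrix α α ℝ) (R : Matrix β β ℝ) : Matrix β α ℝ :=
  -((R + Fᵀ * Q * F)⁻¹ * Fᵀ * Q)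

variable {F : Matrix α β ℝ} {Q : Matrix α α ℝ} {R : Matrix β β ℝ}

theorem schurForm_isSymm (hQ : Q.IsSymm) (hR : R.IsSymm) : (schurForm F Q R).IsSymm := by
  have hS : (R + Fᵀ * Q * F)⁻¹.IsSymm := (hR.add (isSymm_transpose_mul_mul F hQ)).inv
  have h := hQ.sub (isSymm_transpose_mul_mul (Fᵀ * Q) hS)
  rwa [transpose_mul, transpose_transpose, hQ.eq, ← Matrix.mul_assoc] at h

theorem quadratic_eq_schurForm_add (hQ : Q.IsSymm) (hR : R.IsSymm)
    (hS : IsUnit (R + Fᵀ * Q * F)) (g : α → ℝ) (u : β → ℝ) :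
    (F *ᵥ u + g) ⬝ᵥ Q *ᵥ (F *ᵥ u + g) + u ⬝ᵥ R *ᵥ u =
      g ⬝ᵥ schurForm F Q R *ᵥ g +
        (u - stationaryGain F Q R *ᵥ g) ⬝ᵥ (R + Fᵀ * Q * F) *ᵥ
          (u - stationaryGain F Q R *ᵥ g) := by
  set S := R + Fᵀ * Q * F with hSdef
  set v := stationaryGain F Q R *ᵥ g with hv
  have hSv : S *ᵥ v = -(Fᵀ *ᵥ Q *ᵥ g) := by
    rw [hv, mulVec_mulVec, stationaryGain, Matrix.mul_neg, Matrix.mul_assoc,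
      mul_nonsing_inv_cancel_left _ _ ((isUnit_iff_isUnit_det _).1 hS), neg_mulVec, mulVec_mulVec]
  have hcross (z : β → ℝ) : z ⬝ᵥ S *ᵥ v = -((F *ᵥ z) ⬝ᵥ Q *ᵥ g) := by
    rw [hSv, dotProduct_neg, dotProduct_transpose_mulVec, dotProduct_comm]
  have hschur : g ⬝ᵥ schurForm F Q R *ᵥ g = g ⬝ᵥ Q *ᵥ g + (F *ᵥ v) ⬝ᵥ Q *ᵥ g := by
    have : schurForm F Q R = Q + Q * F * stationaryGain F Q R := by
      simp only [schurForm, stationaryGain, Matrix.mul_neg, Matrix.mul_assoc, sub_eq_add_neg]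
    rw [this, add_mulVec, dotProduct_add, ← mulVec_mulVec, ← mulVec_mulVec,
      dotProduct_mulVec_comm_of_isSymm hQ (F *ᵥ v)]
  have hSsymm : S.IsSymm := hR.add (isSymm_transpose_mul_mul F hQ)
  have hSu : u ⬝ᵥ S *ᵥ u = u ⬝ᵥ R *ᵥ u + (F *ᵥ u) ⬝ᵥ Q *ᵥ (F *ᵥ u) := by
    rw [hSdef, add_mulVec, dotProduct_add, dotProduct_transpose_mul_mul_mulVec]
  simp only [hschur, mulVec_add, mulVec_sub, dotProduct_add, dotProduct_sub, add_dotProduct,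
    sub_dotProduct, hcross, hSu, dotProduct_mulVec_comm_of_isSymm hSsymm v u,
    dotProduct_mulVec_comm_of_isSymm hQ g (F *ᵥ u)]
  ring

theorem quadratic_stationaryGain (hQ : Q.IsSymm) (hR : R.IsSymm)
    (hS : IsUnit (R + Fᵀ * Q * F)) (g : α → ℝ) :
    (F *ᵥ stationaryGain F Q R *ᵥ g + g) ⬝ᵥ Q *ᵥ (F *ᵥ stationaryGain F Q R *ᵥ g + g) +
        (stationaryGain F Q R *ᵥ g) ⬝ᵥ R *ᵥ stationaryGain F Q R *ᵥ g =
      g ⬝ᵥ schurForm F Q R *ᵥ g := by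
  rw [quadratic_eq_schurForm_add hQ hR hS, sub_self, mulVec_zero, dotProduct_zero, add_zero]

theorem schurForm_isLeast (hQ : Q.PosSemidef) (hR : R.PosDef) (g : α → ℝ) :
    IsLeast (Set.range fun u => (F *ᵥ u + g) ⬝ᵥ Q *ᵥ (F *ᵥ u + g) + u ⬝ᵥ R *ᵥ u)
      (g ⬝ᵥ schurForm F Q R *ᵥ g) := by
  have hQs := isHermitian_iff_isSymm.1 hQ.isHermitian
  have hRs := isHermitian_iff_isSymm.1 hR.isHermitian
  have hS := posDef_add_transpose_mul_mul hR hQ F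
  refine ⟨⟨_, quadratic_stationaryGain hQs hRs hS.isUnit g⟩, ?_⟩
  rintro _ ⟨u, rfl⟩
  dsimp only
  rw [quadratic_eq_schurForm_add hQs hRs hS.isUnit g u]
  exact le_add_of_nonneg_right (dotProduct_mulVec_nonneg_of_posSemidef hS.posSemidef _)

theorem quadratic_le_schurForm (hQ : Q.IsSymm) (hR : R.IsSymm)
    (hS : (-(R + Fᵀ * Q * F)).PosDef) (g : α → ℝ) (u : β → ℝ) :
    (F *ᵥ u + g) ⬝ᵥ Q *ᵥ (F *ᵥ u + g) + u ⬝ᵥ R *ᵥ u ≤ g ⬝ᵥ schurForm F Q R *ᵥ g := by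
  rw [quadratic_eq_schurForm_add hQ hR (by simpa using hS.isUnit.neg)]
  refine add_le_of_nonpos_right (neg_nonneg.1 ?_)
  rw [← dotProduct_neg, ← neg_mulVec]
  exact dotProduct_mulVec_nonneg_of_posSemidef hS.posSemidef _

theorem mul_inv_one_add_eq_schurForm [DecidableEq α] (hQ : Q.PosSemidef) (hR : R.PosDef) :
    Q * (1 + F * R⁻¹ * Fᵀ * Q)⁻¹ = schurForm F Q R := by
  have hRinv : R⁻¹⁻¹ = R := nonsing_inv_nonsing_inv _ ((isUnit_iff_isUnit_det _).1 hR.isUnit)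
  have woodbury := add_mul_mul_inv_eq_sub (A := (1 : Matrix α α ℝ)) (U := F) (C := R⁻¹)
    (V := Fᵀ * Q) isUnit_one (isUnit_nonsing_inv_iff.2 hR.isUnit) (by
      simpa [hRinv] using (posDef_add_transpose_mul_mul hR hQ F).isUnit)
  simp only [hRinv, inv_one, Matrix.mul_one, Matrix.one_mul, ← Matrix.mul_assoc] at woodbury
  rw [woodbury, schurForm, Matrix.mul_sub, Matrix.mul_one]
  simp only [Matrix.mul_assoc]

end CompletingTheSquare

section Dissipation

variable {α β : Type*} [Fintype α] [Fintype β]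

/-- The feedback `u = Kx` makes `xᵀPx` a storage function for `x⁺ = Ax + Bu + w`: it decreases by
at least the stage cost minus the supply rate `γ²wᵀw`. -/
def IsDissipative (A : Matrix α α ℝ) (B : Matrix α β ℝ) (Q : Matrix α α ℝ) (R : Matrix β β ℝ)
    (P : Matrix α α ℝ) (K : Matrix β α ℝ) (γ : ℝ) : Prop :=
  ∀ x w : α → ℝ,
    x ⬝ᵥ Q *ᵥ x + (K *ᵥ x) ⬝ᵥ R *ᵥ K *ᵥ x +
        ((A + B * K) *ᵥ x + w) ⬝ᵥ P *ᵥ ((A + B * K) *ᵥ x + w) ≤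
      x ⬝ᵥ P *ᵥ x + γ ^ 2 * (w ⬝ᵥ w)

theorem IsDissipative.mono {A : Matrix α α ℝ} {B : Matrix α β ℝ} {Q : Matrix α α ℝ}
    {R : Matrix β β ℝ} {P : Matrix α α ℝ} {K : Matrix β α ℝ} {γ γ' : ℝ}
    (h : IsDissipative A B Q R P K γ) (hγ : γ ^ 2 ≤ γ' ^ 2) : IsDissipative A B Q R P K γ' :=
  fun x w => (h x w).trans (by gcongr; simpa using dotProduct_star_self_nonneg w)

variable [DecidableEq α]

theorem schurForm_one_neg_smul_one {P : Matrix α α ℝ} {γ : ℝ}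
    (h : IsUnit (γ ^ 2 • (1 : Matrix α α ℝ) - P)) :
    schurForm (1 : Matrix α α ℝ) P (-(γ ^ 2 • 1)) =
      P + P * (γ ^ 2 • (1 : Matrix α α ℝ) - P)⁻¹ * P := by
  have hinv : (-(γ ^ 2 • (1 : Matrix α α ℝ)) + P)⁻¹ = -(γ ^ 2 • (1 : Matrix α α ℝ) - P)⁻¹ := by
    refine inv_eq_left_inv ?_
    rw [neg_add_eq_sub, ← neg_sub _ P, neg_mul_neg,
      nonsing_inv_mul _ ((isUnit_iff_isUnit_det _).1 h)]
  rw [schurForm, transpose_one, Matrix.one_mul, Matrix.mul_one, Matrix.mul_one, hinv,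
    Matrix.mul_neg, Matrix.neg_mul, sub_neg_eq_add]

theorem dotProduct_add_le_worstCase {P : Matrix α α ℝ} (hP : P.IsSymm) {γ : ℝ}
    (hγP : (γ ^ 2 • (1 : Matrix α α ℝ) - P).PosDef) (y w : α → ℝ) :
    (y + w) ⬝ᵥ P *ᵥ (y + w) - γ ^ 2 * (w ⬝ᵥ w) ≤
      y ⬝ᵥ (P + P * (γ ^ 2 • (1 : Matrix α α ℝ) - P)⁻¹ * P) *ᵥ y := by
  have h := quadratic_le_schurForm (F := 1) (R := -(γ ^ 2 • 1)) hP
    ((isSymm_one.smul _).neg) (by simpa [add_comm, sub_eq_add_neg] using hγP) y w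
  rw [schurForm_one_neg_smul_one hγP.isUnit] at h
  simpa [add_comm, neg_mulVec, smul_mulVec, sub_eq_add_neg] using h

theorem posSemidef_add_mul_inv_mul {P : Matrix α α ℝ} (hP : P.PosSemidef) {M : Matrix α α ℝ}
    (hM : M.PosSemidef) : (P + P * M⁻¹ * P).PosSemidef := by
  have h := hM.inv.conjTranspose_mul_mul_same P
  rw [hP.isHermitian.eq] at h
  exact hP.add h

theorem isDissipative_of_riccati [DecidableEq β] {A : Matrix α α ℝ} {B : Matrix α β ℝ}
    {Q : Matrix α α ℝ} {R : Matrix β β ℝ} {P Pbar : Matrix α α ℝ} {γ : ℝ}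
    (hR : R.PosDef) (hP : P.PosSemidef) (hγP : (γ ^ 2 • (1 : Matrix α α ℝ) - P).PosDef)
    (hPbar : Pbar = P + P * (γ ^ 2 • (1 : Matrix α α ℝ) - P)⁻¹ * P)
    (hRic : P = Q + Aᵀ * Pbar * A - Aᵀ * Pbar * B * (R + Bᵀ * Pbar * B)⁻¹ * Bᵀ * Pbar * A) :
    IsDissipative A B Q R P (-((R + Bᵀ * Pbar * B)⁻¹ * Bᵀ * Pbar * A)) γ := by
  have hPs := isHermitian_iff_isSymm.1 hP.isHermitian
  have hRs := isHermitian_iff_isSymm.1 hR.isHermitian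
  have hPbar_psd : Pbar.PosSemidef := hPbar ▸ posSemidef_add_mul_inv_mul hP hγP.posSemidef
  have hPbars := isHermitian_iff_isSymm.1 hPbar_psd.isHermitian
  have hgain : -((R + Bᵀ * Pbar * B)⁻¹ * Bᵀ * Pbar * A) = stationaryGain B Pbar R * A :=
    (Matrix.neg_mul _ _).symm
  have hvalue : P = Q + Aᵀ * schurForm B Pbar R * A := by
    refine hRic.trans ?_
    rw [schurForm, Matrix.mul_sub, Matrix.sub_mul, add_sub_assoc]
    simp only [Matrix.mul_assoc]
  intro x w
  rw [hgain]
  set v := stationaryGain B Pbar R *ᵥ A *ᵥ x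
  have hnext : (A + B * (stationaryGain B Pbar R * A)) *ᵥ x = B *ᵥ v + A *ᵥ x := by
    rw [add_mulVec, add_comm, ← mulVec_mulVec, ← mulVec_mulVec]
  have hworst := dotProduct_add_le_worstCase hPs hγP (B *ᵥ v + A *ᵥ x) w
  have hoptimal := quadratic_stationaryGain hPbars hRs
    (posDef_add_transpose_mul_mul hR hPbar_psd B).isUnit (A *ᵥ x)
  have hcost : x ⬝ᵥ P *ᵥ x = x ⬝ᵥ Q *ᵥ x + (A *ᵥ x) ⬝ᵥ schurForm B Pbar R *ᵥ A *ᵥ x := by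
    rw [hvalue, add_mulVec, dotProduct_add, dotProduct_transpose_mul_mul_mulVec]
  rw [hnext, ← mulVec_mulVec, hcost]
  rw [← hPbar] at hworst
  linarith

end Dissipation

section BlockDiagonal

variable {ι κ : Type*}

theorem dotProduct_eq_sum_curry [Fintype ι] [Fintype κ] (x y : ι × κ → ℝ) :
    x ⬝ᵥ y = ∑ t, curry x t ⬝ᵥ curry y t :=
  Fintype.sum_prod_type _

variable [DecidableEq ι]

/-- The block diagonal matrix with diagonal blocks `M t`. The block index comes first, as in
`SIdx` and `UIdx`. -/
def blkdiag (M : ι → Matrix κ κ ℝ) : Matrix (ι × κ) (ι × κ) ℝ :=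
  of fun p q => if p.1 = q.1 then M p.1 p.2 q.2 else 0

variable {M : ι → Matrix κ κ ℝ}

theorem blkdiag_isSymm (hM : ∀ t, (M t).IsSymm) : (blkdiag M).IsSymm := by
  refine IsSymm.ext fun p q => ?_
  rcases eq_or_ne p.1 q.1 with h | h
  · simp [blkdiag, h, (hM q.1).apply]
  · simp [blkdiag, h, h.symm]

section Fintype

variable [Fintype ι] [Fintype κ]

theorem curry_blkdiag_mulVec (M : ι → Matrix κ κ ℝ) (x : ι × κ → ℝ) (t : ι) :
    curry (blkdiag M *ᵥ x) t = M t *ᵥ curry x t := by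
  ext i
  simp [blkdiag, mulVec, dotProduct, curry, Fintype.sum_prod_type_right]

theorem dotProduct_blkdiag_mulVec (M : ι → Matrix κ κ ℝ) (x : ι × κ → ℝ) :
    x ⬝ᵥ blkdiag M *ᵥ x = ∑ t, curry x t ⬝ᵥ M t *ᵥ curry x t := by
  simp only [dotProduct_eq_sum_curry, curry_blkdiag_mulVec]

end Fintype

variable [Finite ι] [Finite κ]

theorem blkdiag_posSemidef (hM : ∀ t, (M t).PosSemidef) : (blkdiag M).PosSemidef := by
  cases nonempty_fintype ι
  cases nonempty_fintype κ
  refine .of_dotProduct_mulVec_nonneg (isHermitian_iff_isSymm.2 (blkdiag_isSymm fun t =>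
    isHermitian_iff_isSymm.1 (hM t).isHermitian)) fun x => ?_
  rw [star_trivial, dotProduct_blkdiag_mulVec]
  exact Finset.sum_nonneg fun t _ => dotProduct_mulVec_nonneg_of_posSemidef (hM t) _

theorem blkdiag_posDef (hM : ∀ t, (M t).PosDef) : (blkdiag M).PosDef := by
  cases nonempty_fintype ι
  cases nonempty_fintype κ
  refine .of_dotProduct_mulVec_pos (blkdiag_posSemidef fun t => (hM t).posSemidef).isHermitian
    fun x hx => ?_
  obtain ⟨⟨t, i⟩, hti⟩ := Function.ne_iff.1 hx
  have hxt : curry x t ≠ 0 := fun h => hti (congrFun h i)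
  rw [star_trivial, dotProduct_blkdiag_mulVec]
  refine Finset.sum_pos' (fun s _ => ?_) ⟨t, Finset.mem_univ t, ?_⟩
  · exact dotProduct_mulVec_nonneg_of_posSemidef (hM s).posSemidef _
  · simpa only [star_trivial] using (hM t).dotProduct_mulVec_pos hxt

end BlockDiagonal

section StackedMatrices

variable {n m T : ℕ}

theorem bigR_eq_blkdiag (R : Matrix (Fin m) (Fin m) ℝ) : bigR m T R = blkdiag fun _ => R := rfl

theorem bigQbar_eq_blkdiag (Q P : Matrix (Fin n) (Fin n) ℝ) :
    bigQbar n T Q P = blkdiag (Fin.snoc (fun _ => Q) P : Fin (T + 1) → Matrix _ _ ℝ) := by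
  ext ⟨t, i⟩ q
  cases t using Fin.lastCases <;> simp [bigQbar, blkdiag]

theorem bigQ_eq_bigQbar (Q : Matrix (Fin n) (Fin n) ℝ) : bigQ n T Q = bigQbar n T Q 0 := by
  ext p q
  simp [bigQ, bigQbar, ite_and]

theorem curry_bigA_mulVec (A : Matrix (Fin n) (Fin n) ℝ) (x : SIdx n T → ℝ) (t : Fin (T + 1)) :
    curry (bigA n T A *ᵥ x) t = A *ᵥ curry x t :=
  curry_blkdiag_mulVec (fun _ => A) x t

theorem curry_bigB_mulVec (B : Matrix (Fin n) (Fin m) ℝ) (u : UIdx m T → ℝ) (t : Fin T) :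
    curry (bigB n m T B *ᵥ u) t.castSucc = B *ᵥ curry u t := by
  ext i
  simp [bigB, mulVec, dotProduct, curry, Fintype.sum_prod_type_right, Fin.val_inj]

theorem curry_Zshift_mulVec (y : SIdx n T → ℝ) :
    curry (Zshift n T *ᵥ y) = Fin.cons 0 (Fin.init (curry y)) := by
  ext t i
  cases t using Fin.cases with
  | zero => simp [Zshift, mulVec, dotProduct, curry]
  | succ t =>
    simp [Zshift, mulVec, dotProduct, curry, Fin.init, Fintype.sum_prod_type, ite_and,
      Fin.sum_univ_castSucc, Fin.val_inj, t.isLt.ne]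

end StackedMatrices

section Trajectories

variable {α β : Type*} [Fintype α] [Fintype β] {T : ℕ}

/-- `x` is the state trajectory of `x⁺ = Ax + Bu + w` under the inputs `u`, where
`δ = (x₀, w₀, …, w_{T-1})` collects the initial state and the disturbances. -/
def IsTrajectory (A : Matrix α α ℝ) (B : Matrix α β ℝ) (x : Fin (T + 1) → α → ℝ)
    (u : Fin T → β → ℝ) (δ : Fin (T + 1) → α → ℝ) : Prop :=
  x 0 = δ 0 ∧ ∀ t : Fin T, x t.succ = A *ᵥ x t.castSucc + B *ᵥ u t + δ t.succ

/-- The sum of the stage costs `xᵀQx + uᵀRu` before the final time. -/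
def runningCost (Q : Matrix α α ℝ) (R : Matrix β β ℝ) (x : Fin (T + 1) → α → ℝ)
    (u : Fin T → β → ℝ) : ℝ :=
  ∑ t : Fin T, (x t.castSucc ⬝ᵥ Q *ᵥ x t.castSucc + u t ⬝ᵥ R *ᵥ u t)

variable {A : Matrix α α ℝ} {B : Matrix α β ℝ}

theorem IsTrajectory.state_unique {x y δ : Fin (T + 1) → α → ℝ} {u : Fin T → β → ℝ}
    (hx : IsTrajectory A B x u δ) (hy : IsTrajectory A B y u δ) : x = y := by
  funext t
  induction t using Fin.induction with
  | zero => rw [hx.1, hy.1]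
  | succ t ih => rw [hx.2, hy.2, ih]

theorem isTrajectory_succ_iff {x δ : Fin (T + 2) → α → ℝ} {u : Fin (T + 1) → β → ℝ} :
    IsTrajectory A B x u δ ↔
      IsTrajectory A B (Fin.init x) (Fin.init u) (Fin.init δ) ∧
        x (Fin.last (T + 1)) = A *ᵥ Fin.init x (Fin.last T) + B *ᵥ u (Fin.last T) +
          δ (Fin.last (T + 1)) := by
  simp only [IsTrajectory, Fin.forall_fin_succ', and_assoc, Fin.succ_last, Fin.init,
    Fin.succ_castSucc, Fin.castSucc_zero]

theorem runningCost_succ (Q : Matrix α α ℝ) (R : Matrix β β ℝ) (x : Fin (T + 2) → α → ℝ)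
    (u : Fin (T + 1) → β → ℝ) :
    runningCost Q R x u = runningCost Q R (Fin.init x) (Fin.init u) +
      (Fin.init x (Fin.last T) ⬝ᵥ Q *ᵥ Fin.init x (Fin.last T) +
        u (Fin.last T) ⬝ᵥ R *ᵥ u (Fin.last T)) :=
  Fin.sum_univ_castSucc _

end Trajectories

section StackedTrajectories

variable {n m T : ℕ} {A : Matrix (Fin n) (Fin n) ℝ} {B : Matrix (Fin n) (Fin m) ℝ}
  {Q : Matrix (Fin n) (Fin n) ℝ} {R : Matrix (Fin m) (Fin m) ℝ}

theorem mulVec_sub_mulVec_eq_iff_isTrajectory {x δ : SIdx n T → ℝ} {u : UIdx m T → ℝ} :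
    (1 - Zshift n T * bigA n T A) *ᵥ x - (Zshift n T * bigB n m T B) *ᵥ u = δ ↔
      IsTrajectory A B (curry x) (curry u) (curry δ) := by
  have hcurry : curry ((1 - Zshift n T * bigA n T A) *ᵥ x - (Zshift n T * bigB n m T B) *ᵥ u) =
      curry x - Fin.cons 0 fun t => A *ᵥ curry x t.castSucc + B *ᵥ curry u t := by
    rw [sub_mulVec, one_mulVec, sub_sub, ← mulVec_mulVec, ← mulVec_mulVec, ← mulVec_add]
    change curry x - curry (Zshift n T *ᵥ _) = _
    rw [curry_Zshift_mulVec]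
    congr 2
    funext t
    exact congrArg₂ (· + ·) (curry_bigA_mulVec A x t.castSucc) (curry_bigB_mulVec B u t)
  rw [← Function.curry_injective.eq_iff, hcurry, funext_iff, Fin.forall_fin_succ, IsTrajectory]
  simp [sub_eq_iff_eq_add']

theorem isUnit_one_sub_Zshift_mul_bigA : IsUnit (1 - Zshift n T * bigA n T A) := by
  rw [← mulVec_injective_iff_isUnit]
  intro x y hxy
  have htraj (z : SIdx n T → ℝ) : IsTrajectory A (0 : Matrix (Fin n) (Fin 0) ℝ) (curry z) (curry 0)
      (curry ((1 - Zshift n T * bigA n T A) *ᵥ z)) :=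
    mulVec_sub_mulVec_eq_iff_isTrajectory.1 (by rw [mulVec_zero, sub_zero])
  exact Function.curry_injective ((htraj x).state_unique (hxy ▸ htraj y))

theorem eq_bigF_mulVec_add_iff_isTrajectory {x δ : SIdx n T → ℝ} {u : UIdx m T → ℝ} :
    x = bigF n m T A B *ᵥ u + bigG n T A *ᵥ δ ↔
      IsTrajectory A B (curry x) (curry u) (curry δ) := by
  have hdet := (isUnit_iff_isUnit_det _).1 (isUnit_one_sub_Zshift_mul_bigA (T := T) (A := A))
  rw [← mulVec_sub_mulVec_eq_iff_isTrajectory, bigF, bigG, ← mulVec_mulVec, ← mulVec_add,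
    sub_eq_iff_eq_add']
  constructor
  · rintro rfl
    rw [mulVec_mulVec, mul_nonsing_inv _ hdet, one_mulVec]
  · intro h
    rw [← h, mulVec_mulVec, nonsing_inv_mul _ hdet, one_mulVec]

theorem dotProduct_bigQbar_add_bigR (P : Matrix (Fin n) (Fin n) ℝ) (x : SIdx n T → ℝ)
    (u : UIdx m T → ℝ) :
    x ⬝ᵥ bigQbar n T Q P *ᵥ x + u ⬝ᵥ bigR m T R *ᵥ u =
      runningCost Q R (curry x) (curry u) +
        curry x (Fin.last T) ⬝ᵥ P *ᵥ curry x (Fin.last T) := by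
  rw [bigQbar_eq_blkdiag, bigR_eq_blkdiag, dotProduct_blkdiag_mulVec, dotProduct_blkdiag_mulVec,
    Fin.sum_univ_castSucc, runningCost, Finset.sum_add_distrib]
  simp only [Fin.snoc_castSucc, Fin.snoc_last]
  ring

theorem bigQ_posSemidef (hQ : Q.PosSemidef) : (bigQ n T Q).PosSemidef := by
  rw [bigQ_eq_bigQbar, bigQbar_eq_blkdiag]
  exact blkdiag_posSemidef (Fin.lastCases (by simpa using .zero) (by simpa using fun _ => hQ))

theorem bigR_posDef (hR : R.PosDef) : (bigR m T R).PosDef :=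
  blkdiag_posDef fun _ => hR

/-- The least running cost that can be achieved when all of `δ` is known in advance. -/
def clairvoyantCost (A : Matrix (Fin n) (Fin n) ℝ) (B : Matrix (Fin n) (Fin m) ℝ)
    (Q : Matrix (Fin n) (Fin n) ℝ) (R : Matrix (Fin m) (Fin m) ℝ)
    (δ : Fin (T + 1) → Fin n → ℝ) : ℝ :=
  uncurry δ ⬝ᵥ Cmat n m T A B Q R *ᵥ uncurry δ

theorem Cmat_eq_schurForm (hQ : Q.PosSemidef) (hR : R.PosDef) :
    Cmat n m T A B Q R =
      (bigG n T A)ᵀ * schurForm (bigF n m T A B) (bigQ n T Q) (bigR m T R) * bigG n T A := by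
  rw [Cmat, Matrix.mul_assoc (bigG n T A)ᵀ,
    mul_inv_one_add_eq_schurForm (bigQ_posSemidef hQ) (bigR_posDef hR)]

theorem Cmat_isSymm (hQ : Q.PosSemidef) (hR : R.PosDef) : (Cmat n m T A B Q R).IsSymm := by
  rw [Cmat_eq_schurForm hQ hR]
  exact isSymm_transpose_mul_mul _ (schurForm_isSymm
    (isHermitian_iff_isSymm.1 (bigQ_posSemidef hQ).isHermitian)
    (isHermitian_iff_isSymm.1 (bigR_posDef hR).isHermitian))

theorem isLeast_clairvoyantCost (hQ : Q.PosSemidef) (hR : R.PosDef)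
    (δ : Fin (T + 1) → Fin n → ℝ) :
    IsLeast {c | ∃ x u, IsTrajectory A B x u δ ∧ runningCost Q R x u = c}
      (clairvoyantCost A B Q R δ) := by
  have h := schurForm_isLeast (F := bigF n m T A B) (bigQ_posSemidef hQ) (bigR_posDef hR)
    (bigG n T A *ᵥ uncurry δ)
  rw [← dotProduct_transpose_mul_mul_mulVec, ← Cmat_eq_schurForm hQ hR] at h
  have hcost (x : SIdx n T → ℝ) (u : UIdx m T → ℝ) :
      runningCost Q R (curry x) (curry u) = x ⬝ᵥ bigQ n T Q *ᵥ x + u ⬝ᵥ bigR m T R *ᵥ u := by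
    rw [bigQ_eq_bigQbar, dotProduct_bigQbar_add_bigR, zero_mulVec, dotProduct_zero, add_zero]
  refine ⟨?_, ?_⟩
  · obtain ⟨u, hu⟩ := h.1
    exact ⟨_, _, eq_bigF_mulVec_add_iff_isTrajectory.1 rfl, (hcost _ u).trans hu⟩
  · rintro _ ⟨x, u, hxu, rfl⟩
    have hx : uncurry x = bigF n m T A B *ᵥ uncurry u + bigG n T A *ᵥ uncurry δ :=
      eq_bigF_mulVec_add_iff_isTrajectory.2 hxu
    refine h.2 ⟨uncurry u, ?_⟩
    dsimp only
    rw [← hx, ← hcost, Function.curry_uncurry, Function.curry_uncurry]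

theorem clairvoyantCost_init_le (hQ : Q.PosSemidef) (hR : R.PosDef)
    (δ : Fin (T + 2) → Fin n → ℝ) :
    clairvoyantCost A B Q R (Fin.init δ : Fin (T + 1) → Fin n → ℝ) ≤
      clairvoyantCost A B Q R δ := by
  obtain ⟨x, u, hxu, hcost⟩ := (isLeast_clairvoyantCost (A := A) (B := B) hQ hR δ).1
  calc clairvoyantCost A B Q R (Fin.init δ : Fin (T + 1) → Fin n → ℝ)
      ≤ runningCost Q R (Fin.init x) (Fin.init u) :=
        (isLeast_clairvoyantCost hQ hR _).2 ⟨_, _, (isTrajectory_succ_iff.1 hxu).1, rfl⟩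
    _ ≤ runningCost Q R x u := by
        rw [runningCost_succ]
        exact le_add_of_nonneg_right (add_nonneg (dotProduct_mulVec_nonneg_of_posSemidef hQ _)
          (dotProduct_mulVec_nonneg_of_posSemidef hR.posSemidef _))
    _ = clairvoyantCost A B Q R δ := hcost

end StackedTrajectories

section ClosedLoop

variable {ι κ ι' κ' : Type*} {α β : Type*} {n m T N : ℕ}

/-- The signal map `δ ↦ Φδ` of a closed-loop response matrix `Φ`, with signals written as families
of vectors indexed by time. -/
def response [Fintype ι'] [Fintype κ'] [DecidableEq ι'] [DecidableEq κ'] :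
    Matrix (ι × κ) (ι' × κ') ℝ ≃ₗ[ℝ] (ι' → κ' → ℝ) →ₗ[ℝ] ι → κ → ℝ :=
  toLin' ≪≫ₗ (LinearEquiv.curry ℝ ℝ ι' κ').arrowCongr (LinearEquiv.curry ℝ ℝ ι κ)

theorem response_apply [Fintype ι'] [Fintype κ'] [DecidableEq ι'] [DecidableEq κ']
    (Φ : Matrix (ι × κ) (ι' × κ') ℝ) (δ : ι' → κ' → ℝ) :
    response Φ δ = curry (Φ *ᵥ uncurry δ) :=
  rfl

/-- The output at time `t` depends only on the inputs at times `s ≤ t`. -/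
def IsCausal (L : (Fin (T + 1) → α → ℝ) →ₗ[ℝ] Fin N → β → ℝ) : Prop :=
  ∀ δ (t : Fin N), (∀ s : Fin (T + 1), (s : ℕ) ≤ t → δ s = 0) → L δ t = 0

theorem isCausal_response_iff [Fintype α] [DecidableEq α]
    {Φ : Matrix (Fin N × β) (Fin (T + 1) × α) ℝ} :
    IsCausal (response Φ) ↔ ∀ p q, (p.1 : ℕ) < q.1 → Φ p q = 0 := by
  constructor
  · intro h p q hpq
    have hzero := congrFun (h (Pi.single q.1 (Pi.single q.2 1)) p.1 fun s hs =>
      Pi.single_eq_of_ne (Fin.ne_of_val_ne (by omega)) _) p.2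
    have hsingle : uncurry (Pi.single q.1 (Pi.single q.2 1)) = Pi.single q (1 : ℝ) := by
      ext ⟨s, j⟩
      rcases eq_or_ne s q.1 with rfl | hs
      · simp [Pi.single_apply, Prod.ext_iff]
      · simp [Prod.ext_iff, hs]
    simpa [response_apply, hsingle, curry] using hzero
  · intro h δ t hδ
    ext i
    refine Finset.sum_eq_zero fun ⟨s, j⟩ _ => ?_
    rcases le_or_gt (s : ℕ) t with hst | hts
    · simp [hδ s hst]
    · simp [h (t, i) (s, j) hts]

theorem causalPair_iff {Φx : Matrix (SIdx n T) (SIdx n T) ℝ}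
    {Φu : Matrix (UIdx m T) (SIdx n T) ℝ} :
    causalPair n m T Φx Φu ↔ IsCausal (response Φx) ∧ IsCausal (response Φu) :=
  (and_congr isCausal_response_iff isCausal_response_iff).symm

variable {A : Matrix (Fin n) (Fin n) ℝ} {B : Matrix (Fin n) (Fin m) ℝ}
  {Q P : Matrix (Fin n) (Fin n) ℝ} {R : Matrix (Fin m) (Fin m) ℝ}
  {W : Set (Fin n → ℝ)} {Zc : Set ((Fin n → ℝ) × (Fin m → ℝ))} {Zf : Set (Fin n → ℝ)}
  {γ : ℝ} {x0 : Fin n → ℝ}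
  {Φx : Matrix (SIdx n T) (SIdx n T) ℝ} {Φu : Matrix (UIdx m T) (SIdx n T) ℝ}

theorem achievablePair_iff :
    achievablePair n m T A B Φx Φu ↔
      ∀ δ, IsTrajectory A B (response Φx δ) (response Φu δ) δ := by
  rw [achievablePair, ext_iff_mulVec, (LinearEquiv.curry ℝ ℝ _ _).toEquiv.forall_congr_left]
  refine forall_congr' fun δ => ?_
  rw [sub_mulVec, one_mulVec, ← mulVec_mulVec, ← mulVec_mulVec]
  exact mulVec_sub_mulVec_eq_iff_isTrajectory

theorem assemble_eq_uncurry_cons (x0 : Fin n → ℝ) (w : Fin T × Fin n → ℝ) :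
    assemble n T x0 w = uncurry (Fin.cons x0 (curry w)) := by
  ext ⟨t, i⟩
  cases t using Fin.cases <;> simp [assemble, curry]

theorem forall_assemble_iff {p : (Fin T × Fin n → ℝ) → (SIdx n T → ℝ) → Prop} :
    (∀ w, p w (assemble n T x0 w)) ↔
      ∀ δ : Fin (T + 1) → Fin n → ℝ, δ 0 = x0 → p (uncurry (Fin.tail δ)) (uncurry δ) := by
  constructor
  · rintro h δ rfl
    simpa [assemble_eq_uncurry_cons] using h (uncurry (Fin.tail δ))
  · intro h w
    simpa [assemble_eq_uncurry_cons] using h (Fin.cons x0 (curry w)) rfl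

theorem safePair_iff :
    safePair n m T W Zc Zf x0 Φx Φu ↔
      ∀ δ : Fin (T + 1) → Fin n → ℝ, δ 0 = x0 → (∀ t : Fin T, δ t.succ ∈ W) →
        (∀ t : Fin T, (response Φx δ t.castSucc, response Φu δ t) ∈ Zc) ∧
          response Φx δ (Fin.last T) ∈ Zf :=
  forall_assemble_iff (p := fun w δ => (∀ t, curry w t ∈ W) →
    (∀ t : Fin T, (curry (Φx *ᵥ δ) t.castSucc, curry (Φu *ᵥ δ) t) ∈ Zc) ∧
      curry (Φx *ᵥ δ) (Fin.last T) ∈ Zf)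

theorem dotProduct_assemble_zero (v : SIdx n T → ℝ) (w : Fin T × Fin n → ℝ) :
    v ⬝ᵥ assemble n T 0 w = (fun c => v (c.1.succ, c.2)) ⬝ᵥ w := by
  simp [assemble_eq_uncurry_cons, dotProduct, Fintype.sum_prod_type, Fin.sum_univ_succ, curry]

theorem dotProduct_submatrix_mulVec (M : Matrix (SIdx n T) (SIdx n T) ℝ)
    (w : Fin T × Fin n → ℝ) :
    w ⬝ᵥ M.submatrix (fun c => (c.1.succ, c.2)) (fun c => (c.1.succ, c.2)) *ᵥ w =
      assemble n T 0 w ⬝ᵥ M *ᵥ assemble n T 0 w := by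
  rw [dotProduct_comm (assemble n T 0 w), dotProduct_assemble_zero, dotProduct_comm]
  congr 1
  funext c
  exact (dotProduct_assemble_zero (M (c.1.succ, c.2)) w).symm

theorem stackW_mulVec (w : Fin T × Fin n → ℝ) :
    stackW n m T Φx Φu *ᵥ w = Sum.elim (Φx *ᵥ assemble n T 0 w) (Φu *ᵥ assemble n T 0 w) := by
  funext r
  rcases r with p | q <;> exact (dotProduct_assemble_zero _ w).symm

theorem dotProduct_bigS_mulVec (x : SIdx n T → ℝ) (u : UIdx m T → ℝ) :
    Sum.elim x u ⬝ᵥ bigS n m T Q P R *ᵥ Sum.elim x u =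
      runningCost Q R (curry x) (curry u) +
        curry x (Fin.last T) ⬝ᵥ P *ᵥ curry x (Fin.last T) := by
  rw [bigS, fromBlocks_mulVec, Sum.elim_comp_inl, Sum.elim_comp_inr, sumElim_dotProduct_sumElim,
    zero_mulVec, zero_mulVec, add_zero, zero_add, dotProduct_bigQbar_add_bigR]

theorem bigS_isSymm (hQ : Q.IsSymm) (hP : P.IsSymm) (hR : R.IsSymm) :
    (bigS n m T Q P R).IsSymm := by
  refine IsSymm.fromBlocks ?_ transpose_zero (blkdiag_isSymm fun _ => hR)
  rw [bigQbar_eq_blkdiag]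
  exact blkdiag_isSymm (Fin.lastCases (by simpa using hP) (by simpa using fun _ => hQ))

theorem lmiOK_iff (hQ : Q.PosSemidef) (hR : R.PosDef) (hP : P.IsSymm) :
    lmiOK n m T A B Q R P γ Φx Φu ↔
      ∀ δ : Fin (T + 1) → Fin n → ℝ, δ 0 = 0 →
        runningCost Q R (response Φx δ) (response Φu δ) +
            response Φx δ (Fin.last T) ⬝ᵥ P *ᵥ response Φx δ (Fin.last T) ≤
          clairvoyantCost A B Q R δ + γ ^ 2 * ∑ t : Fin T, δ t.succ ⬝ᵥ δ t.succ := by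
  have hsymm := (((isSymm_one (n := Fin T × Fin n) (α := ℝ)).smul (γ ^ 2)).add
    ((Cmat_isSymm (T := T) (A := A) (B := B) hQ hR).submatrix fun c => (c.1.succ, c.2))).sub
      (isSymm_transpose_mul_mul (stackW n m T Φx Φu) (bigS_isSymm
        (isHermitian_iff_isSymm.1 hQ.isHermitian) hP (isHermitian_iff_isSymm.1 hR.isHermitian)))
  rw [lmiOK, posSemidef_iff_dotProduct_mulVec, and_iff_right (isHermitian_iff_isSymm.2 hsymm)]
  refine Iff.trans (forall_congr' fun w => ?_) (forall_assemble_iff (x0 := 0) (p := fun w δ =>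
    runningCost Q R (curry (Φx *ᵥ δ)) (curry (Φu *ᵥ δ)) +
        curry (Φx *ᵥ δ) (Fin.last T) ⬝ᵥ P *ᵥ curry (Φx *ᵥ δ) (Fin.last T) ≤
      δ ⬝ᵥ Cmat n m T A B Q R *ᵥ δ + γ ^ 2 * ∑ t : Fin T, curry w t ⬝ᵥ curry w t))
  rw [star_trivial, sub_mulVec, add_mulVec, dotProduct_sub, dotProduct_add, sub_nonneg,
    smul_mulVec, one_mulVec, dotProduct_smul, smul_eq_mul, dotProduct_submatrix_mulVec,
    dotProduct_transpose_mul_mul_mulVec, stackW_mulVec, dotProduct_bigS_mulVec,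
    dotProduct_eq_sum_curry w w, add_comm (γ ^ 2 * _)]

/-- `(X, U)` are the signal maps `δ ↦ (x, u)` of a closed loop in `Π_T^γ(x₀)`. The inequality in
`regret_le` is the LMI evaluated at `δ = (0, w)`. -/
structure IsFeasible (A : Matrix (Fin n) (Fin n) ℝ) (B : Matrix (Fin n) (Fin m) ℝ)
    (Q : Matrix (Fin n) (Fin n) ℝ) (R : Matrix (Fin m) (Fin m) ℝ) (P : Matrix (Fin n) (Fin n) ℝ)
    (W : Set (Fin n → ℝ)) (Zc : Set ((Fin n → ℝ) × (Fin m → ℝ))) (Zf : Set (Fin n → ℝ)) (γ : ℝ)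
    (x0 : Fin n → ℝ) (X : (Fin (T + 1) → Fin n → ℝ) →ₗ[ℝ] Fin (T + 1) → Fin n → ℝ)
    (U : (Fin (T + 1) → Fin n → ℝ) →ₗ[ℝ] Fin T → Fin m → ℝ) : Prop where
  causal : IsCausal X ∧ IsCausal U
  trajectory : ∀ δ, IsTrajectory A B (X δ) (U δ) δ
  safe : ∀ δ, δ 0 = x0 → (∀ t : Fin T, δ t.succ ∈ W) →
    (∀ t : Fin T, (X δ t.castSucc, U δ t) ∈ Zc) ∧ X δ (Fin.last T) ∈ Zf
  regret_le : ∀ δ, δ 0 = 0 →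
    runningCost Q R (X δ) (U δ) + X δ (Fin.last T) ⬝ᵥ P *ᵥ X δ (Fin.last T) ≤
      clairvoyantCost A B Q R δ + γ ^ 2 * ∑ t : Fin T, δ t.succ ⬝ᵥ δ t.succ

theorem memPi_iff_isFeasible (hQ : Q.PosSemidef) (hR : R.PosDef) (hP : P.IsSymm) :
    memPi n m T A B Q R P W Zc Zf γ x0 Φx Φu ↔
      IsFeasible A B Q R P W Zc Zf γ x0 (response Φx) (response Φu) := by
  rw [memPi, causalPair_iff, achievablePair_iff, safePair_iff, lmiOK_iff hQ hR hP]
  exact ⟨fun ⟨hc, ht, hs, hr⟩ => ⟨hc, ht, hs, hr⟩, fun ⟨hc, ht, hs, hr⟩ => ⟨hc, ht, hs, hr⟩⟩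

theorem mem_Xset_iff_exists_isFeasible (hQ : Q.PosSemidef) (hR : R.PosDef) (hP : P.IsSymm) :
    x0 ∈ Xset n m T A B Q R P W Zc Zf γ ↔
      ∃ X U, IsFeasible (T := T) A B Q R P W Zc Zf γ x0 X U := by
  simp only [Xset, Set.mem_ofPred_eq, memPi_iff_isFeasible hQ hR hP]
  rw [response.surjective.exists]
  exact exists_congr fun _ => response.surjective.exists.symm

end ClosedLoop

section Extension

variable {α β : Type*} [Fintype α] {T : ℕ}

/-- The input map `U` over horizon `T`, prolonged by one step of the feedback `u_T = K x_T`. -/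
def extendInput (K : Matrix β α ℝ) (X : (Fin (T + 1) → α → ℝ) →ₗ[ℝ] Fin (T + 1) → α → ℝ)
    (U : (Fin (T + 1) → α → ℝ) →ₗ[ℝ] Fin T → β → ℝ) :
    (Fin (T + 2) → α → ℝ) →ₗ[ℝ] Fin (T + 1) → β → ℝ where
  toFun δ := Fin.snoc (U (Fin.init δ)) (K *ᵥ X (Fin.init δ) (Fin.last T))
  map_add' δ δ' := by
    have hinit : Fin.init (δ + δ') = Fin.init δ + Fin.init δ' := rfl
    ext t
    cases t using Fin.lastCases <;> simp [hinit, mulVec_add]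
  map_smul' c δ := by
    have hinit : Fin.init (c • δ) = c • Fin.init δ := rfl
    ext t
    cases t using Fin.lastCases <;> simp [hinit, mulVec_smul]

variable {K : Matrix β α ℝ} {X : (Fin (T + 1) → α → ℝ) →ₗ[ℝ] Fin (T + 1) → α → ℝ}
  {U : (Fin (T + 1) → α → ℝ) →ₗ[ℝ] Fin T → β → ℝ}

theorem init_extendInput (δ : Fin (T + 2) → α → ℝ) :
    Fin.init (extendInput K X U δ) = U (Fin.init δ) :=
  Fin.init_snoc (α := fun _ => β → ℝ) _ _

theorem extendInput_last (δ : Fin (T + 2) → α → ℝ) :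
    extendInput K X U δ (Fin.last T) = K *ᵥ X (Fin.init δ) (Fin.last T) :=
  Fin.snoc_last (α := fun _ => β → ℝ) _ _

theorem isCausal_extendInput (hX : IsCausal X) (hU : IsCausal U) :
    IsCausal (extendInput K X U) := by
  intro δ t hδ
  cases t using Fin.lastCases with
  | last =>
    rw [extendInput_last, hX (Fin.init δ) (Fin.last T) fun s hs => hδ s.castSucc hs,
      mulVec_zero]
  | cast t =>
    exact (congrFun (init_extendInput δ) t).trans (hU _ _ fun s hs => hδ s.castSucc hs)

variable [Fintype β]

/-- The state map `X` over horizon `T`, prolonged by one step of the closed loop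
`x_{T+1} = (A + BK)x_T + w_T`. -/
def extendState (A : Matrix α α ℝ) (B : Matrix α β ℝ) (K : Matrix β α ℝ)
    (X : (Fin (T + 1) → α → ℝ) →ₗ[ℝ] Fin (T + 1) → α → ℝ) :
    (Fin (T + 2) → α → ℝ) →ₗ[ℝ] Fin (T + 2) → α → ℝ where
  toFun δ := Fin.snoc (X (Fin.init δ))
    ((A + B * K) *ᵥ X (Fin.init δ) (Fin.last T) + δ (Fin.last (T + 1)))
  map_add' δ δ' := by
    have hinit : Fin.init (δ + δ') = Fin.init δ + Fin.init δ' := rfl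
    ext t
    cases t using Fin.lastCases <;> simp [hinit, mulVec_add, add_add_add_comm]
  map_smul' c δ := by
    have hinit : Fin.init (c • δ) = c • Fin.init δ := rfl
    ext t
    cases t using Fin.lastCases <;> simp [hinit, mulVec_smul, mul_add]

variable {A : Matrix α α ℝ} {B : Matrix α β ℝ}

theorem init_extendState (δ : Fin (T + 2) → α → ℝ) :
    Fin.init (extendState A B K X δ) = X (Fin.init δ) :=
  Fin.init_snoc (α := fun _ => α → ℝ) _ _

theorem extendState_last (δ : Fin (T + 2) → α → ℝ) :
    extendState A B K X δ (Fin.last (T + 1)) =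
      (A + B * K) *ᵥ X (Fin.init δ) (Fin.last T) + δ (Fin.last (T + 1)) :=
  Fin.snoc_last (α := fun _ => α → ℝ) _ _

theorem isCausal_extendState (hX : IsCausal X) : IsCausal (extendState A B K X) := by
  intro δ t hδ
  cases t using Fin.lastCases with
  | last =>
    rw [extendState_last, hX (Fin.init δ) (Fin.last T) fun s _ => hδ s.castSucc s.castSucc.le_last,
      mulVec_zero, hδ _ le_rfl, add_zero]
  | cast t =>
    exact (congrFun (init_extendState δ) t).trans (hX _ _ fun s hs => hδ s.castSucc hs)

theorem isTrajectory_extend (h : ∀ δ, IsTrajectory A B (X δ) (U δ) δ) (δ : Fin (T + 2) → α → ℝ) :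
    IsTrajectory A B (extendState A B K X δ) (extendInput K X U δ) δ := by
  rw [isTrajectory_succ_iff, init_extendState, init_extendInput, extendState_last,
    extendInput_last, add_mulVec, mulVec_mulVec]
  exact ⟨h _, rfl⟩

theorem safe_extend {W : Set (α → ℝ)} {Zc : Set ((α → ℝ) × (β → ℝ))} {Zf : Set (α → ℝ)}
    (hZfK : ∀ x ∈ Zf, (x, K *ᵥ x) ∈ Zc)
    (hZfInv : ∀ x ∈ Zf, ∀ w ∈ W, (A + B * K) *ᵥ x + w ∈ Zf) {δ : Fin (T + 2) → α → ℝ}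
    (hlast : δ (Fin.last (T + 1)) ∈ W)
    (h : (∀ t : Fin T, (X (Fin.init δ) t.castSucc, U (Fin.init δ) t) ∈ Zc) ∧
      X (Fin.init δ) (Fin.last T) ∈ Zf) :
    (∀ t : Fin (T + 1), (extendState A B K X δ t.castSucc, extendInput K X U δ t) ∈ Zc) ∧
      extendState A B K X δ (Fin.last (T + 1)) ∈ Zf := by
  have hstate (t : Fin (T + 1)) : extendState A B K X δ t.castSucc = X (Fin.init δ) t :=
    congrFun (init_extendState δ) t
  have hinput (t : Fin T) : extendInput K X U δ t.castSucc = U (Fin.init δ) t :=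
    congrFun (init_extendInput δ) t
  simp only [Fin.forall_fin_succ', hstate, hinput, extendInput_last, extendState_last]
  exact ⟨⟨h.1, hZfK _ h.2⟩, hZfInv _ h.2 _ hlast⟩

theorem IsDissipative.cost_extend_le {Q P : Matrix α α ℝ} {R : Matrix β β ℝ} {γ : ℝ}
    (h : IsDissipative A B Q R P K γ) (δ : Fin (T + 2) → α → ℝ) :
    runningCost Q R (extendState A B K X δ) (extendInput K X U δ) +
        extendState A B K X δ (Fin.last (T + 1)) ⬝ᵥ
          P *ᵥ extendState A B K X δ (Fin.last (T + 1)) ≤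
      runningCost Q R (X (Fin.init δ)) (U (Fin.init δ)) +
        X (Fin.init δ) (Fin.last T) ⬝ᵥ P *ᵥ X (Fin.init δ) (Fin.last T) +
          γ ^ 2 * (δ (Fin.last (T + 1)) ⬝ᵥ δ (Fin.last (T + 1))) := by
  rw [runningCost_succ, init_extendState, init_extendInput, extendInput_last, extendState_last]
  linarith [h (X (Fin.init δ) (Fin.last T)) (δ (Fin.last (T + 1)))]

end Extension

section Inclusions

variable {n m T : ℕ} {A : Matrix (Fin n) (Fin n) ℝ} {B : Matrix (Fin n) (Fin m) ℝ}
  {Q P : Matrix (Fin n) (Fin n) ℝ} {R : Matrix (Fin m) (Fin m) ℝ} {K : Matrix (Fin m) (Fin n) ℝ}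
  {W : Set (Fin n → ℝ)} {Zc : Set ((Fin n → ℝ) × (Fin m → ℝ))} {Zf : Set (Fin n → ℝ)} {γ : ℝ}

theorem IsFeasible.extend {x0 : Fin n → ℝ}
    {X : (Fin (T + 1) → Fin n → ℝ) →ₗ[ℝ] Fin (T + 1) → Fin n → ℝ}
    {U : (Fin (T + 1) → Fin n → ℝ) →ₗ[ℝ] Fin T → Fin m → ℝ}
    (h : IsFeasible A B Q R P W Zc Zf γ x0 X U) (hQ : Q.PosSemidef) (hR : R.PosDef)
    (hdiss : IsDissipative A B Q R P K γ) (hZfK : ∀ x ∈ Zf, (x, K *ᵥ x) ∈ Zc)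
    (hZfInv : ∀ x ∈ Zf, ∀ w ∈ W, (A + B * K) *ᵥ x + w ∈ Zf) :
    IsFeasible A B Q R P W Zc Zf γ x0 (extendState A B K X) (extendInput K X U) where
  causal := ⟨isCausal_extendState h.causal.1, isCausal_extendInput h.causal.1 h.causal.2⟩
  trajectory := isTrajectory_extend h.trajectory
  safe δ hδ0 hδW := safe_extend hZfK hZfInv (hδW (Fin.last T))
    (h.safe (Fin.init δ) hδ0 fun t => hδW t.castSucc)
  regret_le δ hδ0 := by
    have hinit := h.regret_le (Fin.init δ) hδ0
    have hstep := hdiss.cost_extend_le (X := X) (U := U) δ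
    have hclair := clairvoyantCost_init_le (A := A) (B := B) hQ hR δ
    have hsum : ∑ t : Fin (T + 1), δ t.succ ⬝ᵥ δ t.succ =
        ∑ t : Fin T, Fin.init δ t.succ ⬝ᵥ Fin.init δ t.succ +
          δ (Fin.last (T + 1)) ⬝ᵥ δ (Fin.last (T + 1)) :=
      Fin.sum_univ_castSucc _
    rw [hsum]
    linarith

theorem Xset_subset_Xset_succ (hQ : Q.PosSemidef) (hR : R.PosDef) (hP : P.IsSymm)
    (hdiss : IsDissipative A B Q R P K γ) (hZfK : ∀ x ∈ Zf, (x, K *ᵥ x) ∈ Zc)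
    (hZfInv : ∀ x ∈ Zf, ∀ w ∈ W, (A + B * K) *ᵥ x + w ∈ Zf) :
    Xset n m T A B Q R P W Zc Zf γ ⊆ Xset n m (T + 1) A B Q R P W Zc Zf γ := by
  intro x0 hx0
  rw [mem_Xset_iff_exists_isFeasible hQ hR hP] at hx0 ⊢
  obtain ⟨X, U, h⟩ := hx0
  exact ⟨_, _, h.extend hQ hR hdiss hZfK hZfInv⟩

theorem Xset_zero (hQ : Q.PosSemidef) (hR : R.PosDef) (hP : P.IsSymm) :
    Xset n m 0 A B Q R P W Zc Zf γ = Zf := by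
  ext x0
  rw [mem_Xset_iff_exists_isFeasible hQ hR hP]
  constructor
  · rintro ⟨X, U, h⟩
    have hX : X (fun _ => x0) (Fin.last 0) = x0 := (h.trajectory _).1
    exact hX ▸ (h.safe _ rfl fun t => t.elim0).2
  · intro hx0
    refine ⟨LinearMap.id, 0, ⟨?_, fun _ _ _ => rfl⟩, fun _ => ⟨rfl, fun t => t.elim0⟩, ?_, ?_⟩
    · exact fun δ t hδ => hδ t le_rfl
    · rintro δ rfl -
      exact ⟨fun t => t.elim0, hx0⟩
    · intro δ hδ
      obtain rfl : δ = 0 := funext (Fin.forall_fin_one.2 hδ)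
      have huncurry : uncurry (0 : Fin (0 + 1) → Fin n → ℝ) = 0 := rfl
      simp [runningCost, clairvoyantCost, huncurry]

end Inclusions

theorem stmt16_general {n m : ℕ}
    {A : Matrix (Fin n) (Fin n) ℝ} {B : Matrix (Fin n) (Fin m) ℝ}
    {Q : Matrix (Fin n) (Fin n) ℝ} {R : Matrix (Fin m) (Fin m) ℝ}
    (hQ : Q.PosSemidef) (hR : R.PosDef) {γf : ℝ}
    {P : Matrix (Fin n) (Fin n) ℝ} (hP : P.PosSemidef)
    (hγP : (γf ^ 2 • (1 : Matrix (Fin n) (Fin n) ℝ) - P).PosDef)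
    {Pbar : Matrix (Fin n) (Fin n) ℝ}
    (hPbar : Pbar = P + P * (γf ^ 2 • (1 : Matrix (Fin n) (Fin n) ℝ) - P)⁻¹ * P)
    (hRic : P = Q + Aᵀ * Pbar * A -
      Aᵀ * Pbar * B * (R + Bᵀ * Pbar * B)⁻¹ * Bᵀ * Pbar * A)
    {Kf : Matrix (Fin m) (Fin n) ℝ}
    (hKf : Kf = -((R + Bᵀ * Pbar * B)⁻¹ * Bᵀ * Pbar * A))
    {W : Set (Fin n → ℝ)} {Zc : Set ((Fin n → ℝ) × (Fin m → ℝ))} {Zf : Set (Fin n → ℝ)}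
    (hZfK : ∀ x ∈ Zf, (x, Kf *ᵥ x) ∈ Zc)
    (hZfInv : ∀ x ∈ Zf, ∀ w ∈ W, (A + B * Kf) *ᵥ x + w ∈ Zf)
    {γ : ℝ} (hγ : γf ^ 2 ≤ γ ^ 2) :
    Xset n m 0 A B Q R P W Zc Zf γ = Zf ∧
      Monotone fun T => Xset n m T A B Q R P W Zc Zf γ := by
  have hPs := isHermitian_iff_isSymm.1 hP.isHermitian
  have hdiss : IsDissipative A B Q R P Kf γ :=
    hKf ▸ (isDissipative_of_riccati hR hP hγP hPbar hRic).mono hγ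
  exact ⟨Xset_zero hQ hR hPs, monotone_nat_of_le_succ fun _ =>
    Xset_subset_Xset_succ hQ hR hPs hdiss hZfK hZfInv⟩

end Development

/-- Proposition 2 (chain of inclusions of feasible sets): for every performance level
`γ ≥ γ_f`, one has `𝒵_f ⊆ X_1^γ`, and `X_T^γ ⊆ X_{T+1}^γ` for every horizon `T ≥ 1`. -/
theorem stmt16 (n m : ℕ) (hn : 0 < n) (hm : 0 < m)
    (A : Matrix (Fin n) (Fin n) ℝ) (B : Matrix (Fin n) (Fin m) ℝ)
    (Q : Matrix (Fin n) (Fin n) ℝ) (R : Matrix (Fin m) (Fin m) ℝ)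
    (hQ : Q.PosSemidef) (hR : R.PosDef)
    (γf : ℝ) (hγf : 0 < γf)
    (P : Matrix (Fin n) (Fin n) ℝ) (hP : P.PosDef)
    (hγP : (γf ^ 2 • (1 : Matrix (Fin n) (Fin n) ℝ) - P).PosDef)
    (Pbar : Matrix (Fin n) (Fin n) ℝ)
    (hPbar : Pbar = P + P * (γf ^ 2 • (1 : Matrix (Fin n) (Fin n) ℝ) - P)⁻¹ * P)
    (hRic : P = Q + Aᵀ * Pbar * A -
      Aᵀ * Pbar * B * (R + Bᵀ * Pbar * B)⁻¹ * Bᵀ * Pbar * A)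
    (Kf : Matrix (Fin m) (Fin n) ℝ)
    (hKf : Kf = -((R + Bᵀ * Pbar * B)⁻¹ * Bᵀ * Pbar * A))
    (W : Set (Fin n → ℝ)) (hWconv : Convex ℝ W) (hWcomp : IsCompact W)
    (hW0 : (0 : Fin n → ℝ) ∈ interior W)
    (Zc : Set ((Fin n → ℝ) × (Fin m → ℝ))) (hZcl : IsClosed Zc) (hZconv : Convex ℝ Zc)
    (hZ0 : ((0 : Fin n → ℝ), (0 : Fin m → ℝ)) ∈ interior Zc)
    (Zf : Set (Fin n → ℝ)) (hZfcl : IsClosed Zf) (hZfconv : Convex ℝ Zf)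
    (hZf0 : (0 : Fin n → ℝ) ∈ interior Zf)
    (hZfK : ∀ x ∈ Zf, (x, Kf *ᵥ x) ∈ Zc)
    (hZfInv : ∀ x ∈ Zf, ∀ w ∈ W, (A + B * Kf) *ᵥ x + w ∈ Zf) :
    ∀ γ : ℝ, γf ≤ γ →
      Zf ⊆ Xset n m 1 A B Q R P W Zc Zf γ ∧
      ∀ T : ℕ, 1 ≤ T →
        Xset n m T A B Q R P W Zc Zf γ ⊆ Xset n m (T + 1) A B Q R P W Zc Zf γ := by
  intro γ hγ
  obtain ⟨hzero, hmono⟩ := stmt16_general hQ hR hP.posSemidef hγP hPbar hRic hKf hZfK hZfInv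
    (pow_le_pow_left₀ hγf.le hγ 2)
  exact ⟨hzero.superset.trans (hmono zero_le_one), fun T _ => hmono T.le_succ⟩

end
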